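/- Assume dom f ≠ ∅ and fix η ∈ ℝ. Then the function Q_{EP_η} : P_Z → ℝ, Q_{EP_η}(x) := μ_Z({ z ∈ ℝˢ : f(x,z) > η }), is lower semicontinuous on P_Z, and it is continuous at every x ∈ P_Z satisfying μ_Z({ z ∈ ℝˢ : f(x,z) = η }) = 0. Moreover, if X ⊆ P_Z is nonempty and compact, then Q_{EP_η} attains its minimum over X. -/

import Mathlib

open MeasureTheory Matrix Set Topology Filter
open scoped ENNReal NNReal

noncomputable section

/-- Feasible set of the lower level problem: `{ y | A y ≤ T x + z }`. -/
def LowerFeas {n m s : ℕ} (A : Matrix (Fin s) (Fin m) ℝ) (T : Matrix (Fin s) (Fin n) ℝ)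
    (x : Fin n → ℝ) (z : Fin s → ℝ) : Set (Fin m → ℝ) :=
  {y | A.mulVec y ≤ T.mulVec x + z}

/-- Lower level optimal solution set `Ψ(x,z) = Argmin { dᵀy | A y ≤ T x + z }`. -/
def Psi {n m s : ℕ} (d : Fin m → ℝ) (A : Matrix (Fin s) (Fin m) ℝ)
    (T : Matrix (Fin s) (Fin n) ℝ) (x : Fin n → ℝ) (z : Fin s → ℝ) : Set (Fin m → ℝ) :=
  {y | y ∈ LowerFeas A T x z ∧ ∀ y' ∈ LowerFeas A T x z, d ⬝ᵥ y ≤ d ⬝ᵥ y'}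

/-- `f(x,z) = cᵀx + inf { qᵀ y | y ∈ Ψ(x,z) }` with values in `ℝ ∪ {±∞}`
(the infimum over the empty set being `+∞`). -/
def fE {n m s : ℕ} (c : Fin n → ℝ) (q d : Fin m → ℝ) (A : Matrix (Fin s) (Fin m) ℝ)
    (T : Matrix (Fin s) (Fin n) ℝ) (x : Fin n → ℝ) (z : Fin s → ℝ) : EReal :=
  ((c ⬝ᵥ x : ℝ) : EReal) + sInf ((fun y => ((q ⬝ᵥ y : ℝ) : EReal)) '' Psi d A T x z)

/-- `P = { (x,z) | ∃ y, A y ≤ T x + z }`. -/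
def Pfeas {n m s : ℕ} (A : Matrix (Fin s) (Fin m) ℝ) (T : Matrix (Fin s) (Fin n) ℝ) :
    Set ((Fin n → ℝ) × (Fin s → ℝ)) :=
  {p | (LowerFeas A T p.1 p.2).Nonempty}

/-- `dom f = { (x,z) | f(x,z) ∈ ℝ }`. -/
def domf {n m s : ℕ} (c : Fin n → ℝ) (q d : Fin m → ℝ) (A : Matrix (Fin s) (Fin m) ℝ)
    (T : Matrix (Fin s) (Fin n) ℝ) : Set ((Fin n → ℝ) × (Fin s → ℝ)) :=
  {p | fE c q d A T p.1 p.2 ≠ ⊤ ∧ fE c q d A T p.1 p.2 ≠ ⊥}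

/-- Topological support of a Borel measure. -/
def msupport {s : ℕ} (μ : Measure (Fin s → ℝ)) : Set (Fin s → ℝ) :=
  {z | ∀ U : Set (Fin s → ℝ), IsOpen U → z ∈ U → μ U ≠ 0}

/-- `P_Z = { x | (x,z) ∈ P for all z ∈ supp μ_Z }`. -/
def PZSet {n m s : ℕ} (A : Matrix (Fin s) (Fin m) ℝ) (T : Matrix (Fin s) (Fin n) ℝ)
    (μZ : Measure (Fin s → ℝ)) : Set (Fin n → ℝ) :=
  {x | ∀ z ∈ msupport μZ, (x, z) ∈ Pfeas A T}

/-!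
A polyhedral cone stays polyhedral when a finitely generated cone is added to it: one generator at
a time, this is Fourier–Motzkin elimination. Hence the set of pairs `(b, t)` for which some `y` has
`A y ≤ b` and `l y ≤ t` is cut out by finitely many linear inequalities, and the optimal value of
`min {l y | A y ≤ b}` is either a maximum of finitely many linear functions of `b` for every
feasible `b`, or `-∞` for every feasible `b`. If the lower level value `φ b` is finite, the lower
level solutions are the points with `A y ≤ b` and `d y ≤ φ b`, so the dichotomy applies once more to
the upper level: `f` is the restriction to `P` of a continuous function `h` with values in `EReal`.
Almost every `z` lies in the support of `μ_Z`, so on `P_Z` the function `f` may be replaced by `h`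
inside the measure. Continuity of `μ_Z` from below then shows that `μ_Z {η < h (x, ·)}` is lower
semicontinuous and, by complementation, that `μ_Z {η ≤ h (x, ·)}` is upper semicontinuous; the two
agree at `x` when `μ_Z {h (x, ·) = η} = 0`.
-/

section PolyhedralCone

open PointedCone

variable {𝕜 M E : Type*} [Field 𝕜] [LinearOrder 𝕜] [IsStrictOrderedRing 𝕜]
  [AddCommGroup M] [Module 𝕜 M] [AddCommGroup E] [Module 𝕜 E] {p : M →ₗ[𝕜] E →ₗ[𝕜] 𝕜}

theorem exists_nonneg_forall_mul_le_iff {α : Type*} {s : Set α} (hs : s.Finite) (a b : α → 𝕜) :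
    (∃ r, 0 ≤ r ∧ ∀ i ∈ s, r * a i ≤ b i) ↔
      (∀ i ∈ s, 0 ≤ a i → 0 ≤ b i) ∧
        ∀ i ∈ s, a i < 0 → ∀ j ∈ s, 0 < a j → a i * b j ≤ a j * b i := by
  constructor
  · rintro ⟨r, hr, h⟩
    refine ⟨fun i hi hai => (mul_nonneg hr hai).trans (h i hi), fun i hi hai j hj haj => ?_⟩
    calc a i * b j ≤ a i * (r * a j) := mul_le_mul_of_nonpos_left (h j hj) hai.le
      _ = a j * (r * a i) := by ring
      _ ≤ a j * b i := mul_le_mul_of_nonneg_left (h i hi) haj.le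
  · rintro ⟨hnonneg, hcross⟩
    -- The greatest of the lower bounds imposed on `r` works.
    obtain ⟨r, hr, hmax⟩ := Set.exists_max_image
      (insert 0 ((fun i => b i / a i) '' {i ∈ s | a i < 0})) id
      (((hs.sep _).image _).insert 0) (insert_nonempty _ _)
    simp only [mem_insert_iff, forall_eq_or_imp, forall_mem_image, id] at hmax
    refine ⟨r, hmax.1, fun j hj => ?_⟩
    rcases lt_trichotomy (a j) 0 with haj | haj | haj
    · exact (div_le_iff_of_neg haj).1 (hmax.2 ⟨hj, haj⟩)
    · simpa [haj] using hnonneg j hj haj.ge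
    · rcases hr with rfl | ⟨i, ⟨hi, hai⟩, rfl⟩
      · simpa using hnonneg j hj haj.le
      · rw [div_mul_eq_mul_div, div_le_iff_of_neg hai]
        linarith [hcross i hi hai j hj haj]

theorem mem_sup_hull_singleton {C : PointedCone 𝕜 E} {v x : E} :
    x ∈ C ⊔ hull 𝕜 {v} ↔ ∃ r : 𝕜, 0 ≤ r ∧ x - r • v ∈ C := by
  simp only [Submodule.mem_sup, Submodule.mem_span_singleton]
  constructor
  · rintro ⟨y, hy, _, ⟨r, rfl⟩, rfl⟩
    exact ⟨r, r.2, by simpa [Nonneg.coe_smul] using hy⟩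
  · rintro ⟨r, hr, hx⟩
    exact ⟨_, hx, _, ⟨⟨r, hr⟩, rfl⟩, by simp [Nonneg.mk_smul]⟩

theorem dual_sup_hull_singleton {s : Set M} (hs : s.Finite) (v : E) :
    dual p s ⊔ hull 𝕜 {v} = dual p ({f ∈ s | 0 ≤ p f v} ∪
      image2 (fun f g => p g v • f - p f v • g) {f ∈ s | p f v < 0} {g ∈ s | 0 < p g v}) := by
  ext x
  have h := exists_nonneg_forall_mul_le_iff hs (p · v) (p · x)
  simp only [mem_sup_hull_singleton, mem_dual, map_sub, map_smul, smul_eq_mul, sub_nonneg,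
    LinearMap.sub_apply, LinearMap.smul_apply, mem_union, or_imp, forall_and, forall_mem_image2,
    mem_sep_iff, and_imp] at h ⊢
  exact h

theorem dualFG_sup_hull_singleton {C : PointedCone 𝕜 E} (hC : C.DualFG p) (v : E) :
    (C ⊔ hull 𝕜 {v}).DualFG p := by
  obtain ⟨s, rfl⟩ := hC
  rw [dual_sup_hull_singleton s.finite_toSet]
  exact DualFG.dual_of_finite p <| (s.finite_toSet.sep _).union <|
    (s.finite_toSet.sep _).image2 _ (s.finite_toSet.sep _)

theorem dualFG_sup_of_fg {C D : PointedCone 𝕜 E} (hC : C.DualFG p) (hD : D.FG) :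
    (C ⊔ D).DualFG p := by
  induction D, hD using Submodule.fg_induction generalizing C with
  | singleton v => exact dualFG_sup_hull_singleton hC v
  | sup D₁ D₂ _ _ h₁ h₂ => exact sup_assoc C D₁ D₂ ▸ h₂ (h₁ hC)

theorem dualFG_positive_pi (ι : Type*) [Finite ι] :
    (positive 𝕜 (ι → 𝕜)).DualFG (.id : Module.Dual 𝕜 (ι → 𝕜) →ₗ[𝕜] _) := by
  have h : positive 𝕜 (ι → 𝕜) =
      dual .id (range (LinearMap.proj (R := 𝕜) (φ := fun _ : ι => 𝕜))) := by
    ext b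
    simp [mem_positive, Pi.le_def]
  exact h ▸ DualFG.dual_of_finite _ (finite_range _)

variable {F : Type*} [AddCommGroup F] [PartialOrder F] [IsOrderedAddMonoid F] [Module 𝕜 F]
  [PosSMulMono 𝕜 F]

theorem dualFG_positive_prod
    (hF : (positive 𝕜 F).DualFG (.id : Module.Dual 𝕜 F →ₗ[𝕜] _)) :
    (positive 𝕜 (F × 𝕜)).DualFG (.id : Module.Dual 𝕜 (F × 𝕜) →ₗ[𝕜] _) := by
  obtain ⟨s, hs⟩ := hF
  have h : positive 𝕜 (F × 𝕜) = dual .id (insert (LinearMap.snd 𝕜 F 𝕜)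
      ((fun f => f ∘ₗ LinearMap.fst 𝕜 F 𝕜) '' (s : Set (Module.Dual 𝕜 F)))) := by
    ext b
    have hb : 0 ≤ b.1 ↔ ∀ f ∈ s, 0 ≤ f b.1 := by
      rw [← mem_positive 𝕜, ← hs]
      simp
    simp only [mem_positive, Prod.le_def, Prod.fst_zero, Prod.snd_zero, hb, mem_dual,
      LinearMap.id_coe, id_eq, forall_mem_insert, forall_mem_image, SetLike.mem_coe,
      LinearMap.snd_apply, LinearMap.comp_apply, LinearMap.fst_apply, and_comm]
  exact h ▸ DualFG.dual_of_finite _ ((s.finite_toSet.image _).insert _)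

theorem exists_finset_exists_le_iff_forall_nonneg [FiniteDimensional 𝕜 F]
    (hF : (positive 𝕜 F).DualFG (.id : Module.Dual 𝕜 F →ₗ[𝕜] _)) (A : E →ₗ[𝕜] F) :
    ∃ s : Finset (Module.Dual 𝕜 F), ∀ b, (∃ y, A y ≤ b) ↔ ∀ f ∈ s, 0 ≤ f b := by
  have hrange : (ofSubmodule A.range).FG :=
    Submodule.FG.restrictScalars (IsNoetherian.noetherian A.range)
  obtain ⟨s, hs⟩ := dualFG_sup_of_fg hF hrange
  refine ⟨s, fun b => ?_⟩
  calc (∃ y, A y ≤ b) ↔ b ∈ positive 𝕜 F ⊔ ofSubmodule A.range := by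
        simp only [Submodule.mem_sup, mem_positive, mem_ofSubmodule_iff, LinearMap.mem_range]
        constructor
        · rintro ⟨y, hy⟩
          exact ⟨b - A y, sub_nonneg.2 hy, A y, ⟨y, rfl⟩, sub_add_cancel _ _⟩
        · rintro ⟨u, hu, _, ⟨y, rfl⟩, rfl⟩
          exact ⟨y, le_add_of_nonneg_left hu⟩
    _ ↔ ∀ f ∈ s, 0 ≤ f b := by rw [← hs]; simp

end PolyhedralCone

section LinearProgram

variable {𝕜 E F : Type*} [Field 𝕜] [LinearOrder 𝕜] [IsStrictOrderedRing 𝕜]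
  [AddCommGroup E] [Module 𝕜 E] [AddCommGroup F] [PartialOrder F] [IsOrderedAddMonoid F]
  [Module 𝕜 F] [PosSMulMono 𝕜 F] [FiniteDimensional 𝕜 F]

theorem exists_finset_exists_map_le_iff_forall_le
    (hF : (PointedCone.positive 𝕜 F).DualFG (.id : Module.Dual 𝕜 F →ₗ[𝕜] _))
    (A : E →ₗ[𝕜] F) (l : E →ₗ[𝕜] 𝕜) :
    ∃ s : Finset (Module.Dual 𝕜 F), ∀ b, (A ⁻¹' Iic b).Nonempty →
      ∀ t, (∃ y ∈ A ⁻¹' Iic b, l y ≤ t) ↔ ∀ f ∈ s, f b ≤ t := by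
  classical
  obtain ⟨s, hs⟩ := exists_finset_exists_le_iff_forall_nonneg (dualFG_positive_prod hF) (A.prod l)
  have hsplit (g : Module.Dual 𝕜 (F × 𝕜)) (b : F) (t : 𝕜) : g (b, t) = g (b, 0) + t * g (0, 1) := by
    rw [← smul_eq_mul, ← map_smul, ← map_add]
    simp
  have hslope : ∀ g ∈ s, 0 ≤ g (0, 1) := (hs (0, 1)).1 ⟨0, by simp [Prod.le_def]⟩
  refine ⟨{g ∈ s | 0 < g (0, 1)}.image fun g => -(g (0, 1))⁻¹ • g ∘ₗ LinearMap.inl 𝕜 F 𝕜,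
    fun b ⟨y, hy⟩ t => ?_⟩
  have hvert : ∀ g ∈ s, g (0, 1) = 0 → 0 ≤ g (b, 0) := fun g hg h => by
    simpa [hsplit g b (l y), h] using (hs (b, l y)).1 ⟨y, hy, le_rfl⟩ g hg
  calc (∃ y ∈ A ⁻¹' Iic b, l y ≤ t) ↔ ∀ g ∈ s, 0 ≤ g (b, 0) + t * g (0, 1) := by
        simp_rw [← hsplit]
        exact hs (b, t)
    _ ↔ ∀ g ∈ s, 0 < g (0, 1) → -(g (0, 1))⁻¹ * g (b, 0) ≤ t := by
        refine forall₂_congr fun g hg => ?_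
        rcases (hslope g hg).eq_or_lt with h | h
        · simp [← h, hvert g hg h.symm]
        · simp only [h, true_imp_iff]
          rw [neg_mul, neg_le, inv_mul_eq_div, le_div_iff₀ h]
          constructor <;> intro <;> linarith
    _ ↔ _ := by
        simp only [Finset.forall_mem_image, Finset.mem_filter, and_imp, LinearMap.smul_apply,
          LinearMap.comp_apply, LinearMap.inl_apply, smul_eq_mul]

end LinearProgram

section Minimizers

variable {α β : Type*} [Preorder β]

/-- The set of minimizers of `d` over `S`, i.e. `Argmin {d y | y ∈ S}`. -/
def minimizers (d : α → β) (S : Set α) : Set α :=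
  {y ∈ S | IsMinOn d S y}

theorem minimizers_eq_sep_le {d : α → β} {S : Set α} {v : β}
    (h : IsLeast (d '' S) v) : minimizers d S = {y ∈ S | d y ≤ v} := by
  obtain ⟨⟨y₀, hy₀, rfl⟩, hmin⟩ := h
  ext y
  exact and_congr_right fun _ =>
    ⟨fun hy => hy hy₀, fun hy y' hy' => hy.trans (hmin (mem_image_of_mem d hy'))⟩

theorem minimizers_eq_empty {d : α → β} {S : Set α} (h : ¬ BddBelow (d '' S)) :
    minimizers d S = ∅ :=
  eq_empty_of_forall_notMem fun y hy => h ⟨d y, forall_mem_image.2 hy.2⟩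

theorem sInf_image_coe_eq_coe {g : α → ℝ} {S : Set α} {v : ℝ} (h : IsLeast (g '' S) v) :
    sInf ((fun y => (g y : EReal)) '' S) = v := by
  rw [← (EReal.coe_strictMono.monotone.map_isLeast h).isGLB.sInf_eq, image_image]

theorem sInf_image_coe_eq_bot {g : α → ℝ} {S : Set α} (h : ¬ BddBelow (g '' S)) :
    sInf ((fun y => (g y : EReal)) '' S) = ⊥ := by
  refine (EReal.eq_bot_iff_forall_lt _).2 fun t => sInf_lt_iff.2 ?_
  obtain ⟨_, ⟨y, hy, rfl⟩, hlt⟩ := not_bddBelow_iff.1 h t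
  exact ⟨g y, mem_image_of_mem _ hy, EReal.coe_lt_coe_iff.2 hlt⟩

end Minimizers

section RealLinearProgram

variable {E F : Type*} [AddCommGroup E] [Module ℝ E]
  [AddCommGroup F] [PartialOrder F] [IsOrderedAddMonoid F] [Module ℝ F] [PosSMulMono ℝ F]
  [FiniteDimensional ℝ F] [TopologicalSpace F] [IsTopologicalAddGroup F] [ContinuousSMul ℝ F]
  [T2Space F]

theorem exists_continuous_isLeast_or_not_bddBelow
    (hF : (PointedCone.positive ℝ F).DualFG (.id : Module.Dual ℝ F →ₗ[ℝ] _))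
    (A : E →ₗ[ℝ] F) (l : E →ₗ[ℝ] ℝ) :
    (∃ φ : F → ℝ, Continuous φ ∧
      ∀ b, (A ⁻¹' Iic b).Nonempty → IsLeast (l '' (A ⁻¹' Iic b)) (φ b)) ∨
    ∀ b, (A ⁻¹' Iic b).Nonempty → ¬ BddBelow (l '' (A ⁻¹' Iic b)) := by
  obtain ⟨s, hs⟩ := exists_finset_exists_map_le_iff_forall_le hF A l
  rcases s.eq_empty_or_nonempty with rfl | hne
  · refine .inr fun b hb => not_bddBelow_iff.2 fun t => ?_
    obtain ⟨y, hy, hyt⟩ := (hs b hb (t - 1)).2 (by simp)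
    exact ⟨l y, mem_image_of_mem l hy, by linarith⟩
  · refine .inl ⟨fun b => s.sup' hne fun f => f b, Continuous.finset_sup'_apply hne fun f _ =>
      f.continuous_of_finiteDimensional, fun b hb => ?_⟩
    have hepi (t : ℝ) : (∃ y ∈ A ⁻¹' Iic b, l y ≤ t) ↔ (s.sup' hne fun f => f b) ≤ t := by
      rw [hs b hb, Finset.sup'_le_iff]
    have hlower : (s.sup' hne fun f => f b) ∈ lowerBounds (l '' (A ⁻¹' Iic b)) :=
      forall_mem_image.2 fun y hy => (hepi (l y)).1 ⟨y, hy, le_rfl⟩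
    obtain ⟨y, hy, hle⟩ := (hepi _).2 le_rfl
    exact ⟨⟨y, hy, hle.antisymm (hlower (mem_image_of_mem l hy))⟩, hlower⟩

theorem exists_continuous_sInf_minimizers_eq
    (hF : (PointedCone.positive ℝ F).DualFG (.id : Module.Dual ℝ F →ₗ[ℝ] _))
    (A : E →ₗ[ℝ] F) (d q : E →ₗ[ℝ] ℝ) :
    ∃ ψ : F → EReal, Continuous ψ ∧ ∀ b, (A ⁻¹' Iic b).Nonempty →
      sInf ((fun y => (q y : EReal)) '' minimizers d (A ⁻¹' Iic b)) = ψ b := by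
  rcases exists_continuous_isLeast_or_not_bddBelow hF A d with ⟨φ, hφ, hd⟩ | hd
  · have hmin (b : F) (hb : (A ⁻¹' Iic b).Nonempty) :
        minimizers d (A ⁻¹' Iic b) = A.prod d ⁻¹' Iic (b, φ b) :=
      minimizers_eq_sep_le (hd b hb)
    have hne (b : F) (hb : (A ⁻¹' Iic b).Nonempty) : (A.prod d ⁻¹' Iic (b, φ b)).Nonempty :=
      let ⟨y, hy, hyφ⟩ := (hd b hb).1
      ⟨y, hy, hyφ.le⟩
    rcases exists_continuous_isLeast_or_not_bddBelow (dualFG_positive_prod hF) (A.prod d) q with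
      ⟨χ, hχ, hq⟩ | hq
    · refine ⟨fun b => χ (b, φ b), continuous_coe_real_ereal.comp (by fun_prop), fun b hb => ?_⟩
      rw [hmin b hb, sInf_image_coe_eq_coe (hq _ (hne b hb))]
    · refine ⟨fun _ => ⊥, continuous_const, fun b hb => ?_⟩
      rw [hmin b hb, sInf_image_coe_eq_bot (hq _ (hne b hb))]
  · refine ⟨fun _ => ⊤, continuous_const, fun b hb => ?_⟩
    rw [minimizers_eq_empty (hd b hb), image_empty, sInf_empty]

end RealLinearProgram

section ParametricMeasure

variable {X Z β : Type*} [TopologicalSpace X] [MeasurableSpace Z] {μ : Measure Z}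
  [IsFiniteMeasure μ] {x₀ : X} [(𝓝 x₀).IsCountablyGenerated]

theorem lowerSemicontinuousAt_measureReal_setOf {p : X → Z → Prop}
    (hp : ∀ z, p x₀ z → ∀ᶠ x in 𝓝 x₀, p x z) :
    LowerSemicontinuousAt (fun x => μ.real {z | p x z}) x₀ := by
  intro r hr
  obtain ⟨U, hU⟩ := (𝓝 x₀).exists_antitone_basis
  let S : ℕ → Set Z := fun k => {z | ∀ x ∈ U k, p x z}
  have hmono : Monotone S := fun i j hij z hz x hx => hz x (hU.antitone hij hx)
  have hsub : {z | p x₀ z} ⊆ ⋃ k, S k := fun z hz =>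
    let ⟨k, hk⟩ := hU.mem_iff.1 (hp z hz)
    mem_iUnion.2 ⟨k, fun _ hx => hk hx⟩
  have hlim : Tendsto (fun k => μ.real (S k)) atTop (𝓝 (μ.real (⋃ k, S k))) :=
    (ENNReal.tendsto_toReal (measure_ne_top _ _)).comp (tendsto_measure_iUnion_atTop hmono)
  obtain ⟨k, hk⟩ := (hlim.eventually_const_lt (hr.trans_le (measureReal_mono hsub))).exists
  filter_upwards [hU.mem k] with x hx
  exact hk.trans_le (measureReal_mono fun z hz => hz x hx)

theorem upperSemicontinuousAt_measureReal_setOf {p : X → Z → Prop}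
    (hmeas : ∀ x, MeasurableSet {z | p x z}) (hp : ∀ z, ¬ p x₀ z → ∀ᶠ x in 𝓝 x₀, ¬ p x z) :
    UpperSemicontinuousAt (fun x => μ.real {z | p x z}) x₀ := by
  intro r hr
  have hcompl (x : X) : μ.real {z | ¬ p x z} = μ.real univ - μ.real {z | p x z} :=
    measureReal_compl (hmeas x)
  have hlsc : LowerSemicontinuousAt (fun x => μ.real {z | ¬ p x z}) x₀ :=
    lowerSemicontinuousAt_measureReal_setOf hp
  simp only [hcompl] at hlsc
  filter_upwards [hlsc (μ.real univ - r) (sub_lt_sub_left hr _)] with x hx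
  exact (sub_lt_sub_iff_left _).1 hx

variable [LinearOrder β] [TopologicalSpace β] [OrderClosedTopology β] {h : X → Z → β} {η : β}

theorem lowerSemicontinuousAt_measureReal_lt (hcont : ∀ z, ContinuousAt (h · z) x₀) :
    LowerSemicontinuousAt (fun x => μ.real {z | η < h x z}) x₀ :=
  lowerSemicontinuousAt_measureReal_setOf fun z => (hcont z).eventually_const_lt

theorem continuousAt_measureReal_lt [MeasurableSpace β] [OpensMeasurableSpace β]
    (hcont : ∀ z, ContinuousAt (h · z) x₀) (hmeas : ∀ x, Measurable (h x))
    (hη : μ {z | h x₀ z = η} = 0) :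
    ContinuousAt (fun x => μ.real {z | η < h x z}) x₀ := by
  refine continuousAt_iff_lower_upperSemicontinuousAt.2
    ⟨lowerSemicontinuousAt_measureReal_lt hcont, fun r hr => ?_⟩
  have hle : μ.real {z | η ≤ h x₀ z} = μ.real {z | η < h x₀ z} := by
    refine measureReal_congr ?_
    filter_upwards [measure_eq_zero_iff_ae_notMem.1 hη] with z hz
    exact propext (Ne.le_iff_lt (Ne.symm hz))
  have husc : UpperSemicontinuousAt (fun x => μ.real {z | η ≤ h x z}) x₀ :=
    upperSemicontinuousAt_measureReal_setOf (fun x => (hmeas x) measurableSet_Ici) fun z hz => by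
      simpa only [not_le] using (hcont z).eventually_lt_const (not_le.1 hz)
  filter_upwards [husc r (hle.trans_lt hr)] with x hx
  exact (measureReal_mono fun z hz => le_of_lt hz).trans_lt hx

end ParametricMeasure

theorem msupport_eq_support {s : ℕ} (μ : Measure (Fin s → ℝ)) : msupport μ = μ.support := by
  rw [Measure.support_eq_forall_isOpen]
  ext z
  simp only [msupport, mem_ofPred_eq, pos_iff_ne_zero]
  exact forall_congr' fun U => Imp.swap

theorem continuous_coe_add {X : Type*} [TopologicalSpace X] {f : X → ℝ} {g : X → EReal}
    (hf : Continuous f) (hg : Continuous g) : Continuous fun x => (f x : EReal) + g x := by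
  refine continuous_iff_continuousAt.2 fun x => ?_
  have hadd : ContinuousAt (fun v : EReal × EReal => v.1 + v.2) (f x, g x) :=
    EReal.continuousAt_add (.inl (EReal.coe_ne_top _)) (.inl (EReal.coe_ne_bot _))
  exact ContinuousAt.comp (f := fun x => ((f x : EReal), g x)) hadd
    ((continuous_coe_real_ereal.comp hf).prodMk hg).continuousAt

theorem exists_continuous_fE_eq {n m s : ℕ} (c : Fin n → ℝ) (q d : Fin m → ℝ)
    (A : Matrix (Fin s) (Fin m) ℝ) (T : Matrix (Fin s) (Fin n) ℝ) :
    ∃ h : (Fin n → ℝ) × (Fin s → ℝ) → EReal, Continuous h ∧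
      ∀ x z, (x, z) ∈ Pfeas A T → fE c q d A T x z = h (x, z) := by
  obtain ⟨ψ, hψ, hval⟩ := exists_continuous_sInf_minimizers_eq
    (dualFG_positive_pi (𝕜 := ℝ) (Fin s)) A.mulVecLin (dotProductBilin ℝ ℝ d)
    (dotProductBilin ℝ ℝ q)
  refine ⟨fun p => (c ⬝ᵥ p.1 : ℝ) + ψ (T.mulVec p.1 + p.2), ?_, fun x z hxz => ?_⟩
  · exact continuous_coe_add (by fun_prop) (hψ.comp (by fun_prop))
  · exact congrArg _ (hval _ hxz)

theorem excessProbability_lsc_continuous_and_attained_general {n m s : ℕ}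
    (c : Fin n → ℝ) (q d : Fin m → ℝ)
    (A : Matrix (Fin s) (Fin m) ℝ) (T : Matrix (Fin s) (Fin n) ℝ)
    (μZ : Measure (Fin s → ℝ)) [IsFiniteMeasure μZ] (η : ℝ)
    (Q : (Fin n → ℝ) → ℝ)
    (hQ : ∀ x, Q x = (μZ {z | (η : EReal) < fE c q d A T x z}).toReal) :
    LowerSemicontinuousOn Q (PZSet A T μZ) ∧
    (∀ x ∈ PZSet A T μZ, μZ {z | fE c q d A T x z = (η : EReal)} = 0 →
      ContinuousWithinAt Q (PZSet A T μZ) x) ∧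
    (∀ X : Set (Fin n → ℝ), X ⊆ PZSet A T μZ → X.Nonempty → IsCompact X →
      ∃ xstar ∈ X, ∀ x ∈ X, Q xstar ≤ Q x) := by
  obtain ⟨h, hcont, hh⟩ := exists_continuous_fE_eq c q d A T
  have hae (x) (hx : x ∈ PZSet A T μZ) : ∀ᵐ z ∂μZ, fE c q d A T x z = h (x, z) := by
    filter_upwards [μZ.support_mem_ae] with z hz
    exact hh x z (hx z (msupport_eq_support μZ ▸ hz))
  have hQh : EqOn Q (fun x => μZ.real {z | (η : EReal) < h (x, z)}) (PZSet A T μZ) := fun x hx =>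
    (hQ x).trans <| measureReal_congr <| (hae x hx).mono fun z hz => congrArg (↑η < ·) hz
  have hsection (x : Fin n → ℝ) (z : Fin s → ℝ) : ContinuousAt (fun x => h (x, z)) x := by fun_prop
  have hlsc : LowerSemicontinuousOn Q (PZSet A T μZ) := fun x hx =>
    ((lowerSemicontinuousAt_measureReal_lt (hsection x)).lowerSemicontinuousWithinAt _
      ).congr_of_eventuallyEq hx hQh.symm.eventuallyEq_nhdsWithin
  refine ⟨hlsc, fun x hx hη => ?_, fun X hX hne hcomp => (hlsc.mono hX).exists_isMinOn hne hcomp⟩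
  have hη' : μZ {z | h (x, z) = η} = 0 := by
    refine (measure_congr <| (hae x hx).mono fun z hz => ?_).trans hη
    exact congrArg (· = (η : EReal)) hz.symm
  exact (continuousAt_measureReal_lt (hsection x) (fun x => by fun_prop) hη'
    ).continuousWithinAt.congr hQh (hQh hx)

theorem excessProbability_lsc_continuous_and_attained {n m s : ℕ}
    (c : Fin n → ℝ) (q d : Fin m → ℝ)
    (A : Matrix (Fin s) (Fin m) ℝ) (T : Matrix (Fin s) (Fin n) ℝ)
    (μZ : Measure (Fin s → ℝ)) [IsProbabilityMeasure μZ]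
    (hdom : (domf c q d A T).Nonempty) (η : ℝ)
    (Q : (Fin n → ℝ) → ℝ)
    (hQ : ∀ x, Q x = (μZ {z | (η : EReal) < fE c q d A T x z}).toReal) :
    LowerSemicontinuousOn Q (PZSet A T μZ) ∧
    (∀ x ∈ PZSet A T μZ, μZ {z | fE c q d A T x z = (η : EReal)} = 0 →
      ContinuousWithinAt Q (PZSet A T μZ) x) ∧
    (∀ X : Set (Fin n → ℝ), X ⊆ PZSet A T μZ → X.Nonempty → IsCompact X →
      ∃ xstar ∈ X, ∀ x ∈ X, Q xstar ≤ Q x) :=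
  excessProbability_lsc_continuous_and_attained_general c q d A T μZ η Q hQ

end
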